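/- Let n ≥ 2 and g = 4π ∑_{j=1}^{k₁} m_j δ_{p_j}, h = 4π ∑_{j=1}^{k₂} n_j δ_{q_j} with m_j, n_j ∈ ℕ. For each λ > 0 let (u*_λ, v*_λ) denote the maximal topological solution of Δu = λ e^v (e^u − 1) + g, Δv = λ e^u (e^v − 1) + h on ℤⁿ (i.e. the topological solution dominating every other topological solution componentwise). Then the map λ ↦ (u*_λ, v*_λ) is monotone: for 0 < λ₁ < λ₂, u*_{λ₁} ≤ u*_{λ₂} and v*_{λ₁} ≤ v*_{λ₂} on ℤⁿ. -/

import Mathlib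

/-!
The maximal solution for `lam₁` is nonpositive by the maximum principle, hence (since
`e^u - 1 ≤ 0`) it is a subsolution of the system for `lam₂ > lam₁`, while `(0, 0)` is a
supersolution because `g, h ≥ 0`. On nonpositive pairs the system is cooperative: `λ eᵛ (eᵘ - 1)` is
nonincreasing in `v`, and its `u`-derivative is at most `λ`. So, after adding `λ u` to both sides,
the system becomes the fixed point equation of an order-preserving map on the order interval
between the subsolution and `(0, 0)`. Knaster–Tarski (`exists_fixedPt_of_monotoneOn_Icc`)
gives a solution in this interval; being squeezed between a function vanishing at infinity and `0`,
it is topological, and it is therefore dominated by the maximal solution for `lam₂`.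
-/

open Filter Real

noncomputable section

namespace CS

abbrev Lat (n : ℕ) := Fin n → ℤ

/-- d(x) = ∑ᵢ |xᵢ|, the graph distance to the origin on ℤⁿ. -/
def latDist {n : ℕ} (x : Lat n) : ℕ := ∑ i, (x i).natAbs

/-- x ~ y iff ∑ᵢ |xᵢ − yᵢ| = 1. -/
def adjacent {n : ℕ} (x y : Lat n) : Prop := (∑ i, (x i - y i).natAbs) = 1

instance {n : ℕ} (x y : Lat n) : Decidable (adjacent x y) :=
  decidable_of_iff ((∑ i, (x i - y i).natAbs) = 1) Iff.rfl

def unitVec {n : ℕ} (i : Fin n) : Lat n := fun j => if j = i then 1 else 0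

/-- The graph Laplacian Δu(x) = ∑_{y ~ x} (u(y) − u(x)) on ℤⁿ. -/
def lapl {n : ℕ} (u : Lat n → ℝ) (x : Lat n) : ℝ :=
  ∑ i, (u (x + unitVec i) + u (x - unitVec i) - 2 * u x)

/-- The filter of neighborhoods of infinity (d(x) → +∞) on ℤⁿ. -/
def atInfty (n : ℕ) : Filter (Lat n) := Filter.comap latDist Filter.atTop

/-- The Dirac mass at p. -/
def dirac {n : ℕ} (p x : Lat n) : ℝ := if x = p then 1 else 0

/-- (u,v) is a topological solution of Δu = λ eᵛ(eᵘ−1) + g, Δv = λ eᵘ(eᵛ−1) + h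
with u, v → 0 at infinity. -/
def IsTopSol {n : ℕ} (lam : ℝ) (g h u v : Lat n → ℝ) : Prop :=
  (∀ x, lapl u x = lam * Real.exp (v x) * (Real.exp (u x) - 1) + g x) ∧
  (∀ x, lapl v x = lam * Real.exp (u x) * (Real.exp (v x) - 1) + h x) ∧
  Filter.Tendsto u (atInfty n) (nhds 0) ∧
  Filter.Tendsto v (atInfty n) (nhds 0)

/-- (u*, v*) is the maximal topological solution: it is a topological solution
dominating every other topological solution componentwise. -/
def IsMaxTopSol {n : ℕ} (lam : ℝ) (g h u v : Lat n → ℝ) : Prop :=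
  IsTopSol lam g h u v ∧
  ∀ u' v' : Lat n → ℝ, IsTopSol lam g h u' v' →
    (∀ x, u' x ≤ u x) ∧ (∀ x, v' x ≤ v x)

theorem finite_not_of_eventually_atInfty {n : ℕ} {P : Lat n → Prop} (hP : ∀ᶠ x in atInfty n, P x) :
    {x | ¬ P x}.Finite := by
  obtain ⟨t, ht, hsub⟩ := hP
  obtain ⟨N, hN⟩ := Filter.mem_atTop_sets.1 ht
  refine (Set.finite_Icc (fun _ => -(N : ℤ) : Lat n) (fun _ => (N : ℤ))).subset ?_
  intro x hx
  have hlt : latDist x < N := by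
    by_contra! hge
    exact hx (hsub (hN _ hge))
  have hi : ∀ i, (x i).natAbs < N := fun i =>
    (Finset.single_le_sum (f := fun i => (x i).natAbs) (fun _ _ => Nat.zero_le _)
      (Finset.mem_univ i)).trans_lt hlt
  refine ⟨fun i => ?_, fun i => ?_⟩
  · have := hi i
    show -(N : ℤ) ≤ x i
    omega
  · have := hi i
    show x i ≤ (N : ℤ)
    omega

/-- Maximum principle: at a positive maximum of `u` the Laplacian is nonpositive. -/
theorem nonpos_of_lapl_pos {n : ℕ} {u : Lat n → ℝ} (hu : Tendsto u (atInfty n) (nhds 0))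
    (hpos : ∀ x, 0 < u x → 0 < lapl u x) (x : Lat n) : u x ≤ 0 := by
  by_contra! hx
  have hfin : {y | ¬ u y < u x}.Finite := finite_not_of_eventually_atInfty (hu.eventually_lt_const hx)
  obtain ⟨z, hz, hmax⟩ := Set.exists_max_image _ u hfin ⟨x, lt_irrefl (u x)⟩
  have hxz : u x ≤ u z := not_lt.1 hz
  have hall : ∀ y, u y ≤ u z := fun y => by
    by_cases hy : u y < u x
    · exact hy.le.trans hxz
    · exact hmax y hy
  have hle : lapl u z ≤ 0 := Finset.sum_nonpos fun i _ => by
    linarith [hall (z + unitVec i), hall (z - unitVec i)]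
  exact absurd (hpos z (hx.trans_le hxz)) (not_lt.2 hle)

/-- Knaster–Tarski on an order interval of pairs of real functions. -/
theorem exists_fixedPt_of_monotoneOn_Icc {α : Type*} {a b : (α → ℝ) × (α → ℝ)} (hab : a ≤ b)
    {T : (α → ℝ) × (α → ℝ) → (α → ℝ) × (α → ℝ)} (hT : MonotoneOn T (Set.Icc a b))
    (ha : a ≤ T a) (hb : T b ≤ b) : ∃ w ∈ Set.Icc a b, T w = w := by
  have hmaps : ∀ w ∈ Set.Icc a b, T w ∈ Set.Icc a b := fun w hw =>
    ⟨ha.trans (hT ⟨le_rfl, hab⟩ hw hw.1), (hT hw ⟨hab, le_rfl⟩ hw.2).trans hb⟩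
  have : Fact (a.1 ≤ b.1) := ⟨hab.1⟩
  have : Fact (a.2 ≤ b.2) := ⟨hab.2⟩
  -- The interval is used as a product of two intervals of functions, which is a complete lattice.
  have hmem : ∀ w : Set.Icc a.1 b.1 × Set.Icc a.2 b.2, (w.1.1, w.2.1) ∈ Set.Icc a b := fun w =>
    ⟨⟨w.1.2.1, w.2.2.1⟩, ⟨w.1.2.2, w.2.2.2⟩⟩
  let f : Set.Icc a.1 b.1 × Set.Icc a.2 b.2 →o Set.Icc a.1 b.1 × Set.Icc a.2 b.2 :=
    { toFun := fun w =>
        (⟨(T (w.1.1, w.2.1)).1, (hmaps _ (hmem w)).1.1, (hmaps _ (hmem w)).2.1⟩,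
          ⟨(T (w.1.1, w.2.1)).2, (hmaps _ (hmem w)).1.2, (hmaps _ (hmem w)).2.2⟩)
      monotone' := fun w z hwz =>
        have hle := hT (hmem w) (hmem z) ⟨hwz.1, hwz.2⟩
        ⟨hle.1, hle.2⟩ }
  have hfix := f.map_lfp
  exact ⟨_, hmem f.lfp, Prod.ext (congrArg (fun w => w.1.1) hfix)
    (congrArg (fun w => w.2.1) hfix)⟩

/-- The sum of `u` over the `2n` neighbours of `x`. -/
def nbrSum {n : ℕ} (u : Lat n → ℝ) (x : Lat n) : ℝ :=
  ∑ i, (u (x + unitVec i) + u (x - unitVec i))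

theorem lapl_eq {n : ℕ} (u : Lat n → ℝ) (x : Lat n) : lapl u x = nbrSum u x - 2 * n * u x := by
  simp only [lapl, nbrSum, Finset.sum_sub_distrib, Finset.sum_const, Finset.card_univ,
    Fintype.card_fin, nsmul_eq_mul]
  ring

theorem nbrSum_mono {n : ℕ} {u w : Lat n → ℝ} (huw : u ≤ w) (x : Lat n) :
    nbrSum u x ≤ nbrSum w x :=
  Finset.sum_le_sum fun _ _ => add_le_add (huw _) (huw _)

/-- One component of the fixed point map: the equation `Δu = lam eᵛ (eᵘ - 1) + g` at `x`, with
`lam * u x` added to both sides to make it order-preserving, solved for the diagonal term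
`(2n + lam) u x`. -/
def jacobiStep {n : ℕ} (lam : ℝ) (g u v : Lat n → ℝ) (x : Lat n) : ℝ :=
  (nbrSum u x + lam * u x - lam * exp (v x) * (exp (u x) - 1) - g x) / (2 * n + lam)

theorem le_jacobiStep_iff {n : ℕ} {lam : ℝ} (hlam : 0 < lam) (g u v : Lat n → ℝ) (x : Lat n) :
    u x ≤ jacobiStep lam g u v x ↔ lam * exp (v x) * (exp (u x) - 1) + g x ≤ lapl u x := by
  have hpos : (0 : ℝ) < 2 * n + lam := by positivity
  rw [jacobiStep, le_div_iff₀ hpos, lapl_eq]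
  constructor <;> intro hh <;> linarith

theorem jacobiStep_le_iff {n : ℕ} {lam : ℝ} (hlam : 0 < lam) (g u v : Lat n → ℝ) (x : Lat n) :
    jacobiStep lam g u v x ≤ u x ↔ lapl u x ≤ lam * exp (v x) * (exp (u x) - 1) + g x := by
  have hpos : (0 : ℝ) < 2 * n + lam := by positivity
  rw [jacobiStep, div_le_iff₀ hpos, lapl_eq]
  constructor <;> intro hh <;> linarith

/-- Order preservation of `(s, t) ↦ s - eᵗ (eˢ - 1)` on nonpositive pairs. -/
theorem reaction_mono {s s' t t' : ℝ} (hs : s ≤ s') (ht : t ≤ t') (hs' : s' ≤ 0) (ht' : t' ≤ 0) :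
    s - exp t * (exp s - 1) ≤ s' - exp t' * (exp s' - 1) := by
  have h1 : exp s' - exp s ≤ s' - s := by
    have e1 : exp s' * (s - s' + 1) ≤ exp s := by
      calc exp s' * (s - s' + 1) ≤ exp s' * exp (s - s') :=
            mul_le_mul_of_nonneg_left (add_one_le_exp _) (exp_pos _).le
        _ = exp s := by rw [← exp_add]; congr 1; ring
    have e2 : exp s' ≤ 1 := exp_le_one_iff.2 hs'
    nlinarith
  have h2 : exp t ≤ exp t' := exp_le_exp.2 ht
  have h3 : exp t' ≤ 1 := exp_le_one_iff.2 ht'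
  have h4 : exp s ≤ exp s' := exp_le_exp.2 hs
  have h5 : exp s ≤ 1 := exp_le_one_iff.2 (hs.trans hs')
  have h6 := mul_nonneg (sub_nonneg.2 h2) (sub_nonneg.2 h5)
  have h7 := mul_nonneg (sub_nonneg.2 h3) (sub_nonneg.2 h4)
  nlinarith

theorem jacobiStep_mono {n : ℕ} {lam : ℝ} (hlam : 0 < lam) (g : Lat n → ℝ)
    {u u' v v' : Lat n → ℝ} (hu : u ≤ u') (hv : v ≤ v') (hu' : u' ≤ 0) (hv' : v' ≤ 0) :
    jacobiStep lam g u v ≤ jacobiStep lam g u' v' := by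
  intro x
  have hr := mul_le_mul_of_nonneg_left
    (reaction_mono (hu x) (hv x) (hu' x) (hv' x)) hlam.le
  have hs := nbrSum_mono hu x
  refine div_le_div_of_nonneg_right ?_ (by positivity)
  linarith

/-- A nonpositive subsolution vanishing at infinity lies below some topological solution. -/
theorem exists_topSol_ge {n : ℕ} {lam : ℝ} (hlam : 0 < lam) {g h u v : Lat n → ℝ}
    (hg : ∀ x, 0 ≤ g x) (hh : ∀ x, 0 ≤ h x) (hu : u ≤ 0) (hv : v ≤ 0)
    (hsu : ∀ x, lam * exp (v x) * (exp (u x) - 1) + g x ≤ lapl u x)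
    (hsv : ∀ x, lam * exp (u x) * (exp (v x) - 1) + h x ≤ lapl v x)
    (hu0 : Tendsto u (atInfty n) (nhds 0)) (hv0 : Tendsto v (atInfty n) (nhds 0)) :
    ∃ U V : Lat n → ℝ, IsTopSol lam g h U V ∧ u ≤ U ∧ v ≤ V := by
  have hlapl0 : ∀ x : Lat n, lapl (0 : Lat n → ℝ) x = 0 := fun x => by simp [lapl]
  obtain ⟨⟨U, V⟩, ⟨⟨h1, h2⟩, ⟨h3, h4⟩⟩, hfix⟩ :=
    exists_fixedPt_of_monotoneOn_Icc (a := (u, v)) (b := (0, 0))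
      (T := fun w => (jacobiStep lam g w.1 w.2, jacobiStep lam h w.2 w.1)) ⟨hu, hv⟩
      (fun w _ z hz hwz =>
        ⟨jacobiStep_mono hlam g hwz.1 hwz.2 hz.2.1 hz.2.2,
          jacobiStep_mono hlam h hwz.2 hwz.1 hz.2.2 hz.2.1⟩)
      ⟨fun x => (le_jacobiStep_iff hlam g u v x).2 (hsu x),
        fun x => (le_jacobiStep_iff hlam h v u x).2 (hsv x)⟩
      ⟨fun x => (jacobiStep_le_iff hlam g 0 0 x).2 (by rw [hlapl0]; simpa using hg x),
        fun x => (jacobiStep_le_iff hlam h 0 0 x).2 (by rw [hlapl0]; simpa using hh x)⟩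
  obtain ⟨hU, hV⟩ := Prod.mk.inj hfix
  refine ⟨U, V, ⟨fun x => le_antisymm ?_ ?_, fun x => le_antisymm ?_ ?_, ?_, ?_⟩, h1, h2⟩
  · exact (jacobiStep_le_iff hlam g U V x).1 (congrFun hU x).le
  · exact (le_jacobiStep_iff hlam g U V x).1 (congrFun hU x).ge
  · exact (jacobiStep_le_iff hlam h V U x).1 (congrFun hV x).le
  · exact (le_jacobiStep_iff hlam h V U x).1 (congrFun hV x).ge
  · exact tendsto_of_tendsto_of_tendsto_of_le_of_le hu0 tendsto_const_nhds h1 h3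
  · exact tendsto_of_tendsto_of_tendsto_of_le_of_le hv0 tendsto_const_nhds h2 h4

/-- Both components of a topological solution with nonnegative sources are nonpositive; the lemma
treats one of them. -/
theorem nonpos_of_eq {n : ℕ} {lam : ℝ} (hlam : 0 < lam) {g u v : Lat n → ℝ}
    (hg : ∀ x, 0 ≤ g x) (he : ∀ x, lapl u x = lam * exp (v x) * (exp (u x) - 1) + g x)
    (hu0 : Tendsto u (atInfty n) (nhds 0)) : u ≤ 0 :=
  nonpos_of_lapl_pos hu0 fun x hx => by
    have h1 : 0 < exp (u x) - 1 := sub_pos.2 (one_lt_exp_iff.2 hx)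
    rw [he]
    exact add_pos_of_pos_of_nonneg (by positivity) (hg x)

/-- For `u ≤ 0` the reaction term decreases as `lam` grows, so solutions become subsolutions. -/
theorem subsol_of_eq {n : ℕ} {lam₁ lam₂ : ℝ} (hlam : lam₁ < lam₂) {g u v : Lat n → ℝ}
    (hu : u ≤ 0) (he : ∀ x, lapl u x = lam₁ * exp (v x) * (exp (u x) - 1) + g x) (x : Lat n) :
    lam₂ * exp (v x) * (exp (u x) - 1) + g x ≤ lapl u x := by
  have h1 : 0 ≤ 1 - exp (u x) := sub_nonneg.2 (exp_le_one_iff.2 (hu x))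
  have h2 := mul_nonneg (mul_nonneg (sub_pos.2 hlam).le (exp_pos (v x)).le) h1
  rw [he]
  linarith

theorem source_nonneg {n k : ℕ} (m : Fin k → ℕ) (p : Fin k → Lat n) (x : Lat n) :
    0 ≤ 4 * Real.pi * ∑ j, (m j : ℝ) * dirac (p j) x := by
  have hd : ∀ j, 0 ≤ dirac (p j) x := fun j => by
    unfold dirac
    split_ifs <;> norm_num
  exact mul_nonneg (by positivity)
    (Finset.sum_nonneg fun j _ => mul_nonneg (Nat.cast_nonneg _) (hd j))

/-- monotonicity in λ of the maximal topological solution: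
if 0 < λ₁ < λ₂ then u*_{λ₁} ≤ u*_{λ₂} and v*_{λ₁} ≤ v*_{λ₂} on ℤⁿ. -/
theorem maximal_solution_monotone_in_lambda
    {n : ℕ} (hn : 2 ≤ n)
    {k₁ k₂ : ℕ} (m : Fin k₁ → ℕ) (nn : Fin k₂ → ℕ)
    (p : Fin k₁ → Lat n) (q : Fin k₂ → Lat n)
    (g h : Lat n → ℝ)
    (hg : g = fun x => 4 * Real.pi * ∑ j, (m j : ℝ) * dirac (p j) x)
    (hh : h = fun x => 4 * Real.pi * ∑ j, (nn j : ℝ) * dirac (q j) x)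
    (lam₁ lam₂ : ℝ) (hlam₁ : 0 < lam₁) (hlam : lam₁ < lam₂)
    (u₁ v₁ u₂ v₂ : Lat n → ℝ)
    (hmax₁ : IsMaxTopSol lam₁ g h u₁ v₁)
    (hmax₂ : IsMaxTopSol lam₂ g h u₂ v₂) :
    (∀ x, u₁ x ≤ u₂ x) ∧ (∀ x, v₁ x ≤ v₂ x) := by
  have hg0 : ∀ x, 0 ≤ g x := fun x => by rw [hg]; exact source_nonneg m p x
  have hh0 : ∀ x, 0 ≤ h x := fun x => by rw [hh]; exact source_nonneg nn q x
  obtain ⟨⟨eu, ev, hu0, hv0⟩, -⟩ := hmax₁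
  have hu := nonpos_of_eq hlam₁ hg0 eu hu0
  have hv := nonpos_of_eq hlam₁ hh0 ev hv0
  obtain ⟨U, V, hUV, huU, hvV⟩ := exists_topSol_ge (hlam₁.trans hlam) hg0 hh0 hu hv
    (subsol_of_eq hlam hu eu) (subsol_of_eq hlam hv ev) hu0 hv0
  obtain ⟨hU, hV⟩ := hmax₂.2 U V hUV
  exact ⟨fun x => (huU x).trans (hU x), fun x => (hvV x).trans (hV x)⟩

end CS
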